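/- arXiv:2601.12198 — 3 statements merged into one kernel-verified Lean document; each statement's English description precedes it below -/
import Mathlib

section
/- Let σ > 0, ρ ∈ (−1,1), Σ = σ²·[[1, ρ],[ρ, 1]], and let μ be a Borel probability measure on ℝ² with density x ↦ g(xᵀΣ⁻¹x) with respect to Lebesgue measure for some nonnegative measurable g. Then μ({x = (x₁,x₂) : x₁·x₂ > 0}) = 1/2 + arcsin(ρ)/π; equivalently, writing P for this probability, ρ = −cos(π·P). -/
open MeasureTheory Matrix Real

/-!
An invertible linear map `A` sends an elliptical law with parameter `S` to one with parameter
`A S Aᵀ`, so an elliptical law with parameter `M Mᵀ` is the image under `M` of a rotation-invariant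
one. In polar coordinates a rotation-invariant density splits into a radial and an angular factor,
so the probability of a cone is the fraction of directions it contains. If `ρ = -cos 2γ`, a square
root `M` of the covariance sends the direction `θ` to a vector with coordinates proportional to
`sin (γ + θ)` and `sin (γ - θ)`. Their product is `cos² θ - cos² γ`, and the directions with
`cos γ < |cos θ|` have total length `4γ`; thus `P = 2γ / π`, that is, `ρ = -cos (π P)`.
-/

section EllipticalLaw

variable {ι : Type*} [Fintype ι] [DecidableEq ι]

/-- `μ` is an elliptical law with covariance parameter `S`: it has a density which is a function of
the quadratic form `xᵀ S⁻¹ x`. Neither positivity of `S` nor the normalisation of `μ` is part of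
the definition, and the profile `g` of the density takes values in `ℝ≥0∞`. -/
def IsEllipticalLaw (μ : Measure (ι → ℝ)) (S : Matrix ι ι ℝ) : Prop :=
  ∃ g : ℝ → ENNReal, Measurable g ∧ μ = volume.withDensity fun x ↦ g (x ⬝ᵥ (S⁻¹ *ᵥ x))

lemma map_withDensity_comp {α β : Type*} [MeasurableSpace α] [MeasurableSpace β] (μ : Measure α)
    {φ : α → β} (hφ : Measurable φ) {f : β → ENNReal} (hf : Measurable f) :
    (μ.withDensity (f ∘ φ)).map φ = (μ.map φ).withDensity f := by
  ext s hs
  rw [Measure.map_apply hφ hs, withDensity_apply _ (hφ hs), withDensity_apply _ hs,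
    setLIntegral_map hs hf hφ]
  rfl

lemma mulVec_dotProduct_inv_mulVec {R : Type*} [CommRing R] {A : Matrix ι ι R}
    (hA : IsUnit A.det) (S : Matrix ι ι R) (x : ι → R) :
    (A *ᵥ x) ⬝ᵥ ((A * S * Aᵀ)⁻¹ *ᵥ (A *ᵥ x)) = x ⬝ᵥ (S⁻¹ *ᵥ x) := by
  have hAt : IsUnit Aᵀ.det := by rwa [det_transpose]
  have hcancel : (A * S * Aᵀ)⁻¹ * A = Aᵀ⁻¹ * S⁻¹ := by
    rw [Matrix.mul_inv_rev, Matrix.mul_inv_rev, ← Matrix.mul_assoc,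
      nonsing_inv_mul_cancel_right _ _ hA]
  rw [mulVec_mulVec, hcancel, ← vecMul_transpose, ← dotProduct_mulVec, mulVec_mulVec,
    mul_nonsing_inv_cancel_left _ _ hAt]

lemma IsEllipticalLaw.map_mulVec {μ : Measure (ι → ℝ)} {S A : Matrix ι ι ℝ}
    (hμ : IsEllipticalLaw μ S) (hA : IsUnit A.det) :
    IsEllipticalLaw (μ.map (A *ᵥ ·)) (A * S * Aᵀ) := by
  obtain ⟨g, hg, rfl⟩ := hμ
  have hvol : (volume : Measure (ι → ℝ)).map (A *ᵥ ·) = ENNReal.ofReal |A.det⁻¹| • volume :=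
    Real.map_matrix_volume_pi_eq_smul_volume_pi hA.ne_zero
  have hf : Measurable fun x : ι → ℝ ↦ g (x ⬝ᵥ ((A * S * Aᵀ)⁻¹ *ᵥ x)) :=
    hg.comp (Continuous.measurable (by fun_prop))
  refine ⟨ENNReal.ofReal |A.det⁻¹| • g, hg.const_smul _, ?_⟩
  calc (volume.withDensity fun x ↦ g (x ⬝ᵥ (S⁻¹ *ᵥ x))).map (A *ᵥ ·)
      = (volume.map (A *ᵥ ·)).withDensity fun x ↦ g (x ⬝ᵥ ((A * S * Aᵀ)⁻¹ *ᵥ x)) := by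
        rw [← map_withDensity_comp _ (Continuous.measurable (by fun_prop)) hf]
        simp only [Function.comp_def, mulVec_dotProduct_inv_mulVec hA]
    _ = volume.withDensity (ENNReal.ofReal |A.det⁻¹| • fun x ↦ g (x ⬝ᵥ ((A * S * Aᵀ)⁻¹ *ᵥ x))) := by
        rw [hvol, withDensity_smul_measure, withDensity_smul _ hf]

lemma IsEllipticalLaw.exists_eq_map_mulVec {μ : Measure (ι → ℝ)} {M : Matrix ι ι ℝ}
    (hμ : IsEllipticalLaw μ (M * Mᵀ)) (hM : IsUnit M.det) :
    ∃ ν : Measure (ι → ℝ), IsEllipticalLaw ν 1 ∧ μ = ν.map (M *ᵥ ·) := by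
  have hMinv : M⁻¹ * (M * Mᵀ) * M⁻¹ᵀ = 1 := by
    rw [nonsing_inv_mul_cancel_left _ _ hM, ← transpose_mul, nonsing_inv_mul _ hM, transpose_one]
  refine ⟨μ.map (M⁻¹ *ᵥ ·), hMinv ▸ hμ.map_mulVec (isUnit_nonsing_inv_det M hM), ?_⟩
  rw [Measure.map_map (Continuous.measurable (by fun_prop)) (Continuous.measurable (by fun_prop))]
  simp only [Function.comp_def, mulVec_mulVec, mul_nonsing_inv _ hM, one_mulVec, Measure.map_id']

end EllipticalLaw

section PolarAngles

/-- The polar angles in `(-π, π)`, the angular range of `polarCoord`, of the directions that lie in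
a planar set `C`. They determine `C` up to a null set when `C` is a cone. -/
def polarAngles (C : Set (Fin 2 → ℝ)) : Set ℝ :=
  {θ ∈ Set.Ioo (-π) π | ![cos θ, sin θ] ∈ C}

lemma measurableSet_polarAngles {C : Set (Fin 2 → ℝ)} (hC : MeasurableSet C) :
    MeasurableSet (polarAngles C) :=
  measurableSet_Ioo.inter (hC.preimage (Continuous.measurable (by fun_prop)))

lemma lintegral_fin_two_eq_polarCoord (f : (Fin 2 → ℝ) → ENNReal) :
    ∫⁻ z, f z = ∫⁻ p in polarCoord.target, ENNReal.ofReal p.1 * f (p.1 • ![cos p.2, sin p.2]) := by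
  rw [MeasurePreserving.lintegral_map_equiv f MeasurableEquiv.finTwoArrow.symm
    ((volume_preserving_finTwoArrow ℝ).symm _), ← lintegral_comp_polarCoord_symm]
  simp

lemma withDensity_radial_apply_cone {g : ℝ → ENNReal} (hg : Measurable g) {C : Set (Fin 2 → ℝ)}
    (hC : MeasurableSet C) (hcone : ∀ r : ℝ, 0 < r → ∀ z, r • z ∈ C ↔ z ∈ C) :
    volume.withDensity (fun z : Fin 2 → ℝ ↦ g (z ⬝ᵥ z)) C
      = (∫⁻ r in Set.Ioi (0 : ℝ), ENNReal.ofReal r * g (r ^ 2)) * volume (polarAngles C) := by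
  have hangles := measurableSet_polarAngles hC
  have hdot (r θ : ℝ) : (r • ![cos θ, sin θ]) ⬝ᵥ (r • ![cos θ, sin θ]) = r ^ 2 := by
    simp only [smul_dotProduct, dotProduct_smul, vec2_dotProduct', smul_eq_mul]
    linear_combination r ^ 2 * sin_sq_add_cos_sq θ
  calc volume.withDensity (fun z : Fin 2 → ℝ ↦ g (z ⬝ᵥ z)) C
      = ∫⁻ p in polarCoord.target, ENNReal.ofReal p.1 *
          C.indicator (fun z ↦ g (z ⬝ᵥ z)) (p.1 • ![cos p.2, sin p.2]) := by
        rw [withDensity_apply _ hC, ← lintegral_indicator hC, lintegral_fin_two_eq_polarCoord]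
    _ = ∫⁻ p in Set.Ioi 0 ×ˢ Set.Ioo (-π) π,
          (ENNReal.ofReal p.1 * g (p.1 ^ 2)) * (polarAngles C).indicator 1 p.2 := by
        refine setLIntegral_congr_fun (measurableSet_Ioi.prod measurableSet_Ioo) ?_
        rintro ⟨r, θ⟩ ⟨hr, hθ⟩
        classical
        have hmem : θ ∈ polarAngles C ↔ r • ![cos θ, sin θ] ∈ C := by
          rw [hcone r hr]
          exact and_iff_right hθ
        simp only [Set.indicator_apply, hmem, hdot, Pi.one_apply, mul_ite, mul_one, mul_zero]
    _ = (∫⁻ r in Set.Ioi (0 : ℝ), ENNReal.ofReal r * g (r ^ 2)) * volume (polarAngles C) := by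
        rw [Measure.volume_eq_prod, ← Measure.prod_restrict,
          lintegral_prod_mul (f := fun r ↦ ENNReal.ofReal r * g (r ^ 2)) (by fun_prop)
            (measurable_one.indicator hangles).aemeasurable,
          lintegral_indicator_one hangles, Measure.restrict_apply hangles,
          Set.inter_eq_left.2 fun _ hθ ↦ hθ.1]

lemma IsEllipticalLaw.measure_cone {ν : Measure (Fin 2 → ℝ)} [IsProbabilityMeasure ν]
    (hν : IsEllipticalLaw ν 1) {C : Set (Fin 2 → ℝ)} (hC : MeasurableSet C)
    (hcone : ∀ r : ℝ, 0 < r → ∀ z, r • z ∈ C ↔ z ∈ C) :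
    ν C = volume (polarAngles C) / ENNReal.ofReal (2 * π) := by
  obtain ⟨g, hg, hdensity⟩ := hν
  simp only [inv_one, one_mulVec] at hdensity
  have hangles : volume (polarAngles Set.univ) = ENNReal.ofReal (2 * π) := by
    simp only [polarAngles, Set.mem_univ, and_true, Set.ofPred_mem_eq, volume_Ioo, sub_neg_eq_add,
      two_mul]
  have hplane :
      (∫⁻ r in Set.Ioi (0 : ℝ), ENNReal.ofReal r * g (r ^ 2)) * ENNReal.ofReal (2 * π) = 1 := by
    rw [← measure_univ (μ := ν), hdensity, withDensity_radial_apply_cone hg .univ (by simp),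
      hangles]
  rw [hdensity, withDensity_radial_apply_cone hg hC hcone, ENNReal.eq_inv_of_mul_eq_one_left hplane,
    mul_comm, div_eq_mul_inv]

end PolarAngles

section Quadrant

lemma cos_lt_abs_cos_iff {γ θ : ℝ} (hγ : γ ∈ Set.Icc 0 π) (hθ : |θ| ≤ π) :
    cos γ < |cos θ| ↔ |θ| < γ ∨ π - γ < |θ| := by
  have hθ' : |θ| ∈ Set.Icc 0 π := ⟨abs_nonneg θ, hθ⟩
  have hγ' : π - γ ∈ Set.Icc 0 π := ⟨sub_nonneg.2 hγ.2, sub_le_self π hγ.1⟩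
  rw [lt_abs, ← cos_abs θ, strictAntiOn_cos.lt_iff_gt hγ hθ', lt_neg, ← cos_pi_sub,
    strictAntiOn_cos.lt_iff_gt hθ' hγ']

lemma volume_setOf_cos_lt_abs_cos {γ : ℝ} (hγ : γ ∈ Set.Icc 0 (π / 2)) :
    volume {θ ∈ Set.Ioo (-π) π | cos γ < |cos θ|} = ENNReal.ofReal (4 * γ) := by
  obtain ⟨hγ₀, hγ₁⟩ := hγ
  have hset : {θ ∈ Set.Ioo (-π) π | cos γ < |cos θ|}
      = Set.Ioo (-π) (γ - π) ∪ Set.Ioo (-γ) γ ∪ Set.Ioo (π - γ) π := by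
    ext θ
    have hiff := fun hθ ↦ cos_lt_abs_cos_iff (θ := θ) ⟨hγ₀, by linarith⟩ hθ
    grind
  have hdisj₁ : Disjoint (Set.Ioo (-π) (γ - π)) (Set.Ioo (-γ) γ) := by
    grind
  have hdisj₂ : Disjoint (Set.Ioo (-π) (γ - π) ∪ Set.Ioo (-γ) γ) (Set.Ioo (π - γ) π) := by
    grind
  rw [hset, measure_union hdisj₂ measurableSet_Ioo, measure_union hdisj₁ measurableSet_Ioo,
    volume_Ioo, volume_Ioo, volume_Ioo, ← ENNReal.ofReal_add (by linarith) (by linarith),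
    ← ENNReal.ofReal_add (by linarith) (by linarith)]
  ring_nf

/-- A square root `M` of the covariance, `M Mᵀ = [[σ₁², σ₁σ₂ρ], [σ₁σ₂ρ, σ₂²]]`, when
`ρ = -cos 2γ`. It is chosen so that, up to scale, the two coordinates of `M z` are the projections
of `z` on directions symmetric about the first axis, at angles `±(π / 2 - γ)`. -/
noncomputable def covarianceRoot (σ₁ σ₂ γ : ℝ) : Matrix (Fin 2) (Fin 2) ℝ :=
  !![σ₁ * sin γ, σ₁ * cos γ; σ₂ * sin γ, -(σ₂ * cos γ)]

lemma det_covarianceRoot (σ₁ σ₂ γ : ℝ) :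
    (covarianceRoot σ₁ σ₂ γ).det = -(σ₁ * σ₂ * sin (2 * γ)) := by
  rw [covarianceRoot, det_fin_two_of, sin_two_mul]
  ring

lemma covarianceRoot_mul_transpose (σ₁ σ₂ γ : ℝ) :
    covarianceRoot σ₁ σ₂ γ * (covarianceRoot σ₁ σ₂ γ)ᵀ
      = !![σ₁ ^ 2, σ₁ * σ₂ * -cos (2 * γ); σ₁ * σ₂ * -cos (2 * γ), σ₂ ^ 2] := by
  have hsq := sin_sq_add_cos_sq γ
  have htwo := cos_two_mul' γ
  ext i j
  fin_cases i <;> fin_cases j <;> simp [covarianceRoot, Matrix.mul_apply] <;> grind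

lemma covarianceRoot_mulVec_apply_mul (σ₁ σ₂ γ θ : ℝ) :
    (covarianceRoot σ₁ σ₂ γ *ᵥ ![cos θ, sin θ]) 0 * (covarianceRoot σ₁ σ₂ γ *ᵥ ![cos θ, sin θ]) 1
      = σ₁ * σ₂ * (cos θ ^ 2 - cos γ ^ 2) := by
  simp only [covarianceRoot, mulVec, of_apply, cons_val_zero, cons_val_one, vec2_dotProduct']
  linear_combination σ₁ * σ₂ * (cos θ ^ 2 * sin_sq γ - cos γ ^ 2 * sin_sq θ)

lemma polarAngles_covarianceRoot_mulVec {σ₁ σ₂ γ : ℝ} (hσ : 0 < σ₁ * σ₂) (hγ : 0 ≤ cos γ) :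
    polarAngles ((covarianceRoot σ₁ σ₂ γ *ᵥ ·) ⁻¹' {x | x 0 * x 1 > 0})
      = {θ ∈ Set.Ioo (-π) π | cos γ < |cos θ|} := by
  ext θ
  refine and_congr_right fun _ ↦ ?_
  rw [Set.mem_preimage, Set.mem_ofPred_eq, covarianceRoot_mulVec_apply_mul, gt_iff_lt,
    mul_pos_iff_of_pos_left hσ, sub_pos, sq_lt_sq, abs_of_nonneg hγ]

lemma IsEllipticalLaw.measure_mul_pos {σ₁ σ₂ γ : ℝ} (hσ : 0 < σ₁ * σ₂)
    (hγ : γ ∈ Set.Ioo 0 (π / 2)) {μ : Measure (Fin 2 → ℝ)} [IsProbabilityMeasure μ]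
    (hμ : IsEllipticalLaw μ
      !![σ₁ ^ 2, σ₁ * σ₂ * -cos (2 * γ); σ₁ * σ₂ * -cos (2 * γ), σ₂ ^ 2]) :
    μ {x | x 0 * x 1 > 0} = ENNReal.ofReal (2 * γ / π) := by
  obtain ⟨hγ₀, hγ₁⟩ := hγ
  have hdet : IsUnit (covarianceRoot σ₁ σ₂ γ).det := by
    rw [det_covarianceRoot, isUnit_iff_ne_zero, neg_ne_zero]
    exact (mul_pos hσ (sin_pos_of_pos_of_lt_pi (by linarith) (by linarith))).ne'
  have hM : Measurable (covarianceRoot σ₁ σ₂ γ *ᵥ ·) := Continuous.measurable (by fun_prop)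
  have hquad : MeasurableSet {x : Fin 2 → ℝ | x 0 * x 1 > 0} :=
    measurableSet_lt measurable_const (by fun_prop)
  rw [← covarianceRoot_mul_transpose] at hμ
  obtain ⟨ν, hν, rfl⟩ := hμ.exists_eq_map_mulVec hdet
  have : IsProbabilityMeasure ν := Measure.isProbabilityMeasure_of_map (covarianceRoot σ₁ σ₂ γ *ᵥ ·)
  have hcone (r : ℝ) (hr : 0 < r) (z : Fin 2 → ℝ) :
      r • z ∈ (covarianceRoot σ₁ σ₂ γ *ᵥ ·) ⁻¹' {x | x 0 * x 1 > 0}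
        ↔ z ∈ (covarianceRoot σ₁ σ₂ γ *ᵥ ·) ⁻¹' {x | x 0 * x 1 > 0} := by
    simp only [Set.mem_preimage, mulVec_smul, Set.mem_ofPred_eq, Pi.smul_apply, smul_eq_mul,
      mul_mul_mul_comm r, gt_iff_lt, mul_pos_iff_of_pos_left (mul_pos hr hr)]
  rw [Measure.map_apply hM hquad, hν.measure_cone (hquad.preimage hM) hcone,
    polarAngles_covarianceRoot_mulVec hσ (cos_nonneg_of_mem_Icc ⟨by linarith, hγ₁.le⟩),
    volume_setOf_cos_lt_abs_cos ⟨hγ₀.le, hγ₁.le⟩, ← ENNReal.ofReal_div_of_pos (by positivity)]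
  congr 1
  field

end Quadrant

theorem stmt16_general {σ₁ σ₂ ρ : ℝ} (hσ : 0 < σ₁ * σ₂) (hρ : ρ ∈ Set.Ioo (-1 : ℝ) 1)
    {μ : Measure (Fin 2 → ℝ)} [IsProbabilityMeasure μ]
    (hμ : IsEllipticalLaw μ !![σ₁ ^ 2, σ₁ * σ₂ * ρ; σ₁ * σ₂ * ρ, σ₂ ^ 2]) :
    (μ {x : Fin 2 → ℝ | x 0 * x 1 > 0}).toReal = 1 / 2 + arcsin ρ / π ∧
    ρ = -cos (π * (μ {x : Fin 2 → ℝ | x 0 * x 1 > 0}).toReal) := by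
  have hlower := neg_pi_div_two_lt_arcsin.2 hρ.1
  have hupper := arcsin_lt_pi_div_two.2 hρ.2
  obtain ⟨γ, hγ⟩ : ∃ γ, 2 * γ = arcsin ρ + π / 2 := ⟨_, mul_div_cancel₀ _ two_ne_zero⟩
  have hργ : ρ = -cos (2 * γ) := by
    rw [hγ, cos_add_pi_div_two, sin_arcsin hρ.1.le hρ.2.le, neg_neg]
  have hγmem : γ ∈ Set.Ioo 0 (π / 2) := ⟨by linarith, by linarith⟩
  have hP : (μ {x : Fin 2 → ℝ | x 0 * x 1 > 0}).toReal = 2 * γ / π := by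
    rw [IsEllipticalLaw.measure_mul_pos hσ hγmem (hργ ▸ hμ),
      ENNReal.toReal_ofReal (div_nonneg (by linarith [hγmem.1]) pi_pos.le)]
  rw [hP, mul_div_cancel₀ _ pi_ne_zero]
  refine ⟨?_, hργ⟩
  rw [hγ]
  field

/-- For `σ > 0`, `ρ ∈ (-1,1)`, `Σ = σ²·[[1,ρ],[ρ,1]]`, and a Borel
probability measure `μ` on `ℝ²` with density `x ↦ g (xᵀ Σ⁻¹ x)` w.r.t. Lebesgue measure,
the quadrant probability satisfies `μ({x₁x₂ > 0}) = 1/2 + arcsin(ρ)/π`, and equivalently,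
writing `P` for this probability, `ρ = -cos(πP)`. -/
theorem stmt16 (σ ρ : ℝ) (hσ : 0 < σ) (hρ : ρ ∈ Set.Ioo (-1 : ℝ) 1)
    (g : ℝ → ℝ) (hg : Measurable g) (hg0 : ∀ t, 0 ≤ g t)
    (μ : Measure (Fin 2 → ℝ)) [IsProbabilityMeasure μ]
    (hμ : μ = volume.withDensity (fun x => ENNReal.ofReal
      (g (x ⬝ᵥ ((σ ^ 2 • !![1, ρ; ρ, 1])⁻¹ *ᵥ x))))) :
    (μ {x : Fin 2 → ℝ | x 0 * x 1 > 0}).toReal = 1 / 2 + Real.arcsin ρ / π ∧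
    ρ = -Real.cos (π * (μ {x : Fin 2 → ℝ | x 0 * x 1 > 0}).toReal) :=
  stmt16_general (mul_pos hσ hσ) hρ ⟨fun t ↦ ENNReal.ofReal (g t), hg.ennreal_ofReal, by
    simpa [Matrix.smul_of, ← sq] using hμ⟩
end

section
/- ∫₀^π (log |cos θ|)² dθ = π·((log 2)² + π²/12); equivalently, (1/(2π))·∫₀^{2π} (log(cos²(θ − φ)))² dθ = 4·((log 2)² + π²/12) for every φ ∈ ℝ. -/
/-!
By the mean value property, `log (1 - z) ^ n` with `n ≠ 0` has average `0` over every circle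
`|z| = r < 1`. This persists for `r = 1`: since `|sin θ| ≤ |1 - r e^{iθ}| ≤ 2`, the integrands are
dominated by `(|log |sin θ|| + C) ^ n`, which is integrable. On the unit circle
`log (1 - e^{2ix}) = log (2 sin x) + i (x - π/2)` for `0 < x < π`, so the real part of the case
`n = 2` is `∫₀^π log² (2 sin x) dx = ∫₀^π (x - π/2)² dx = π³/12`. Expanding the square and using
`∫₀^π log (sin x) dx = -π log 2` gives `∫₀^π log² (sin x) dx`, hence the integral of `log² |cos|`
over any period.
-/

open MeasureTheory Real

open Filter Metric Set Topology
open scoped Interval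

lemma ae_sin_ne_zero : ∀ᵐ θ : ℝ, sin θ ≠ 0 := by
  have hcount : (range fun n : ℤ ↦ (n : ℝ) * π).Countable := countable_range _
  filter_upwards [hcount.ae_notMem volume] with θ hθ
  rwa [Ne, sin_eq_zero_iff]

lemma abs_log_pow_le {y : ℝ} (hy : 0 < y) (hy1 : y ≤ 1) (n : ℕ) :
    |log y| ^ n ≤ 2 ^ n * n.factorial * y ^ (-(1 / 2) : ℝ) := by
  have habs : |log y| = -log y := abs_of_nonpos (log_nonpos hy.le hy1)
  have hexp : (|log y| / 2) ^ n / n.factorial ≤ y ^ (-(1 / 2) : ℝ) := by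
    rw [rpow_def_of_pos hy, show log y * -(1 / 2) = |log y| / 2 by rw [habs]; ring]
    exact pow_div_factorial_le_exp _ (by positivity) n
  calc |log y| ^ n = 2 ^ n * n.factorial * ((|log y| / 2) ^ n / n.factorial) := by
        rw [div_pow]
        field_simp
    _ ≤ 2 ^ n * n.factorial * y ^ (-(1 / 2) : ℝ) := by gcongr

lemma intervalIntegrable_log_sin_pow_zero_pi_div_two (n : ℕ) :
    IntervalIntegrable (fun x ↦ log (sin x) ^ n) volume 0 (π / 2) := by
  have hbound : IntervalIntegrable (fun x ↦ 2 ^ n * n.factorial * (2 / π * x) ^ (-(1 / 2) : ℝ))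
      volume 0 (π / 2) := by
    refine IntervalIntegrable.const_mul ?_ _
    simpa using (intervalIntegral.intervalIntegrable_rpow' (a := 0) (b := 1)
      (r := -(1 / 2)) (by norm_num)).comp_mul_left (c := 2 / π)
  have hmeas : Measurable fun x ↦ log (sin x) ^ n := by fun_prop
  refine hbound.mono_fun' hmeas.aestronglyMeasurable ?_
  filter_upwards [ae_restrict_mem measurableSet_uIoc] with x hx
  rw [uIoc_of_le (by positivity)] at hx
  have hlin : 0 < 2 / π * x := mul_pos (by positivity) hx.1
  have hsin : 2 / π * x ≤ sin x := mul_le_sin hx.1.le hx.2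
  calc ‖log (sin x) ^ n‖ = |log (sin x)| ^ n := by rw [norm_pow, norm_eq_abs]
    _ ≤ 2 ^ n * n.factorial * sin x ^ (-(1 / 2) : ℝ) :=
      abs_log_pow_le (hlin.trans_le hsin) (sin_le_one x) n
    _ ≤ 2 ^ n * n.factorial * (2 / π * x) ^ (-(1 / 2) : ℝ) := by
      gcongr ?_ * ?_
      exact rpow_le_rpow_of_nonpos hlin hsin (by norm_num)

lemma periodic_log_sin : Function.Periodic (fun x ↦ log (sin x)) π := fun x ↦ by
  simp only [sin_add_pi, log_neg_eq_log]

lemma intervalIntegrable_log_sin_pow (n : ℕ) (a b : ℝ) :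
    IntervalIntegrable (fun x ↦ log (sin x) ^ n) volume a b := by
  have hleft := intervalIntegrable_log_sin_pow_zero_pi_div_two n
  have hright : IntervalIntegrable (fun x ↦ log (sin x) ^ n) volume (π / 2) π := by
    simpa [sub_half] using (hleft.comp_sub_left π).symm
  have hperiod : Function.Periodic (fun x ↦ log (sin x) ^ n) π := periodic_log_sin.comp (· ^ n)
  refine hperiod.intervalIntegrable pi_ne_zero (t := 0) ?_ a b
  simpa using hleft.trans hright

lemma intervalIntegrable_abs_log_sin_add_const_pow (C : ℝ) (n : ℕ) (a b : ℝ) :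
    IntervalIntegrable (fun x ↦ (|log (sin x)| + C) ^ n) volume a b := by
  have hterm (k : ℕ) : IntervalIntegrable
      (fun x ↦ |log (sin x)| ^ k * C ^ (n - k) * n.choose k) volume a b := by
    simp only [← abs_pow]
    exact ((intervalIntegrable_log_sin_pow k a b).abs.mul_const _).mul_const _
  have hsum := IntervalIntegrable.sum (Finset.range (n + 1)) fun k _ ↦ hterm k
  refine hsum.congr fun x _ ↦ ?_
  simp only [Finset.sum_apply, add_pow]

theorem circleAverage_of_dominated {E : Type*} [NormedAddCommGroup E] [NormedSpace ℂ E]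
    [CompleteSpace E] {f : ℂ → E} {c : ℂ} {R : ℝ} (bound : ℝ → ℝ) (hR : 0 < R)
    (hf : DifferentiableOn ℂ f (ball c R))
    (h_bound : ∀ᶠ r in 𝓝[<] R, ∀ᵐ θ, θ ∈ Ι 0 (2 * π) → ‖f (circleMap c r θ)‖ ≤ bound θ)
    (bound_integrable : IntervalIntegrable bound volume 0 (2 * π))
    (h_lim : ∀ᵐ θ, θ ∈ Ι 0 (2 * π) →
      Tendsto (fun r ↦ f (circleMap c r θ)) (𝓝[<] R) (𝓝 (f (circleMap c R θ)))) :
    circleAverage f c R = f c := by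
  have hinside : ∀ᶠ r in 𝓝[<] R, DiffContOnCl ℂ f (ball c |r|) := by
    filter_upwards [Ioo_mem_nhdsLT hR] with r hr
    rw [abs_of_pos hr.1]
    exact hf.diffContOnCl_ball (closedBall_subset_ball hr.2)
  have hmeas : ∀ᶠ r in 𝓝[<] R, AEStronglyMeasurable (fun θ ↦ f (circleMap c r θ))
      (volume.restrict (Ι 0 (2 * π))) := by
    filter_upwards [Ioo_mem_nhdsLT hR] with r hr
    refine (hf.continuousOn.comp_continuous (by fun_prop) fun θ ↦ ?_).aestronglyMeasurable
    exact closedBall_subset_ball hr.2 (circleMap_mem_closedBall c hr.1.le θ)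
  have htendsto : Tendsto (fun r ↦ circleAverage f c r) (𝓝[<] R) (𝓝 (circleAverage f c R)) :=
    (intervalIntegral.tendsto_integral_filter_of_dominated_convergence bound hmeas h_bound
      bound_integrable h_lim).const_smul _
  refine tendsto_nhds_unique htendsto (tendsto_const_nhds.congr' ?_)
  filter_upwards [hinside] with r hr using hr.circleAverage.symm

lemma one_sub_mem_slitPlane {z : ℂ} (hz : ‖z‖ ≤ 1) (hz1 : z ≠ 1) : 1 - z ∈ Complex.slitPlane := by
  by_contra h
  rw [Complex.mem_slitPlane_iff, not_or, not_lt, not_not] at h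
  simp only [Complex.sub_re, Complex.one_re, Complex.sub_im, Complex.one_im] at h
  have hre : z.re ≤ 1 := (Complex.re_le_norm z).trans hz
  exact hz1 (Complex.ext (by simp; linarith) (by simp; linarith))

lemma abs_sin_le_norm_one_sub_circleMap (r θ : ℝ) : |sin θ| ≤ ‖1 - circleMap 0 r θ‖ := by
  have hrotate : Complex.exp ((-θ : ℝ) * Complex.I) - r
      = Complex.exp ((-θ : ℝ) * Complex.I) * (1 - circleMap 0 r θ) := by
    rw [circleMap_zero, mul_sub, mul_one, mul_left_comm, ← Complex.exp_add, ← add_mul,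
      ← Complex.ofReal_add, neg_add_cancel, Complex.ofReal_zero, zero_mul, Complex.exp_zero,
      mul_one]
  calc |sin θ| = |(Complex.exp ((-θ : ℝ) * Complex.I) - r).im| := by
        rw [Complex.sub_im, Complex.exp_ofReal_mul_I_im, Complex.ofReal_im, sub_zero, sin_neg,
          abs_neg]
    _ ≤ ‖Complex.exp ((-θ : ℝ) * Complex.I) - r‖ := Complex.abs_im_le_norm _
    _ = ‖1 - circleMap 0 r θ‖ := by
        rw [hrotate, norm_mul, Complex.norm_exp_ofReal_mul_I, one_mul]

lemma norm_log_one_sub_circleMap_le {r θ : ℝ} (hr : |r| ≤ 1) (hθ : sin θ ≠ 0) :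
    ‖Complex.log (1 - circleMap 0 r θ)‖ ≤ |log (sin θ)| + (log 2 + π) := by
  set w := 1 - circleMap 0 r θ
  have hsin : 0 < |sin θ| := abs_pos.2 hθ
  have hlower : |sin θ| ≤ ‖w‖ := abs_sin_le_norm_one_sub_circleMap r θ
  have hupper : ‖w‖ ≤ 2 := by
    have htriangle := norm_sub_le 1 (circleMap 0 r θ)
    rw [norm_one, norm_circleMap_zero] at htriangle
    linarith
  have hlog : |log ‖w‖| ≤ |log (sin θ)| + log 2 := by
    have h₁ : log (sin θ) ≤ log ‖w‖ := log_abs (sin θ) ▸ log_le_log hsin hlower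
    have h₂ : log ‖w‖ ≤ log 2 := log_le_log (hsin.trans_le hlower) hupper
    have h₃ : 0 ≤ log 2 := log_nonneg one_le_two
    rw [abs_le]
    constructor <;> linarith [neg_abs_le (log (sin θ)), abs_nonneg (log (sin θ))]
  calc ‖Complex.log w‖
    _ ≤ |log ‖w‖| + |w.arg| := by
      rw [← Complex.log_re, ← Complex.log_im]
      exact Complex.norm_le_abs_re_add_abs_im _
    _ ≤ |log (sin θ)| + (log 2 + π) := by linarith [Complex.abs_arg_le_pi w]

lemma circleIntegrable_log_one_sub_pow (n : ℕ) :
    CircleIntegrable (fun z ↦ Complex.log (1 - z) ^ n) 0 1 := by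
  have hmeas : Measurable fun z ↦ Complex.log (1 - z) ^ n := by fun_prop
  refine (intervalIntegrable_abs_log_sin_add_const_pow (log 2 + π) n 0 (2 * π)).mono_fun'
    (hmeas.comp (continuous_circleMap 0 1).measurable).aestronglyMeasurable ?_
  filter_upwards [ae_restrict_of_ae ae_sin_ne_zero] with θ hθ
  rw [norm_pow]
  exact pow_le_pow_left₀ (norm_nonneg _) (norm_log_one_sub_circleMap_le (by simp) hθ) n

theorem circleAverage_log_one_sub_pow {n : ℕ} (hn : n ≠ 0) :
    circleAverage (fun z ↦ Complex.log (1 - z) ^ n) 0 1 = 0 := by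
  have hdiff (z : ℂ) (hz : ‖z‖ ≤ 1) (hz1 : z ≠ 1) :
      DifferentiableAt ℂ (fun z ↦ Complex.log (1 - z) ^ n) z :=
    ((differentiableAt_id.const_sub 1).clog (one_sub_mem_slitPlane hz hz1)).pow n
  have hcenter := circleAverage_of_dominated (f := fun z ↦ Complex.log (1 - z) ^ n) (c := 0)
    (fun θ ↦ (|log (sin θ)| + (log 2 + π)) ^ n) one_pos ?_ ?_
    (intervalIntegrable_abs_log_sin_add_const_pow _ n _ _) ?_
  · simpa [hn] using hcenter
  · intro z hz
    rw [mem_ball_zero_iff] at hz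
    exact (hdiff z hz.le fun h ↦ by simp [h] at hz).differentiableWithinAt
  · filter_upwards [Ioo_mem_nhdsLT one_pos] with r hr
    filter_upwards [ae_sin_ne_zero] with θ hθ _
    rw [norm_pow]
    exact pow_le_pow_left₀ (norm_nonneg _)
      (norm_log_one_sub_circleMap_le (abs_le.2 ⟨by linarith [hr.1], hr.2.le⟩) hθ) n
  · filter_upwards [ae_sin_ne_zero] with θ hθ _
    have hne : circleMap 0 1 θ ≠ 1 := fun h ↦ hθ <| by
      simpa [circleMap_zero, Complex.exp_ofReal_mul_I_im] using congrArg Complex.im h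
    have hradial : Tendsto (fun r ↦ circleMap 0 r θ) (𝓝[<] 1) (𝓝 (circleMap 0 1 θ)) :=
      Continuous.continuousWithinAt (by unfold circleMap; fun_prop)
    exact (hdiff _ (by simp) hne).continuousAt.tendsto.comp hradial

lemma one_sub_exp_two_mul_I (z : ℂ) :
    1 - Complex.exp (2 * z * Complex.I)
      = 2 * Complex.sin z * Complex.exp ((z - π / 2) * Complex.I) := by
  have hrot : Complex.exp ((z - π / 2) * Complex.I) = Complex.exp (z * Complex.I) * -Complex.I := by
    rw [sub_mul, Complex.exp_sub, Complex.exp_pi_div_two_mul_I, Complex.div_I, mul_neg]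
  have hinv : Complex.exp (-z * Complex.I) * Complex.exp (z * Complex.I) = 1 := by
    rw [← Complex.exp_add, neg_mul, neg_add_cancel, Complex.exp_zero]
  have hsq : Complex.exp (2 * z * Complex.I) = Complex.exp (z * Complex.I) ^ 2 := by
    rw [← Complex.exp_nat_mul, Nat.cast_ofNat, mul_assoc]
  rw [hrot, hsq, Complex.sin]
  linear_combination -hinv + (Complex.exp (-z * Complex.I) * Complex.exp (z * Complex.I)
    - Complex.exp (z * Complex.I) ^ 2) * Complex.I_sq

lemma log_one_sub_exp_two_mul_I {x : ℝ} (hx : x ∈ Ioo 0 π) :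
    Complex.log (1 - Complex.exp (2 * x * Complex.I))
      = log (2 * sin x) + (x - π / 2) * Complex.I := by
  have hsin : 0 < 2 * sin x := mul_pos two_pos (sin_pos_of_mem_Ioo hx)
  have him : ((x - π / 2) * Complex.I : ℂ).im = x - π / 2 := by simp
  have hpolar : 1 - Complex.exp (2 * x * Complex.I)
      = (2 * sin x : ℝ) * Complex.exp ((x - π / 2) * Complex.I) := by
    rw [one_sub_exp_two_mul_I, Complex.ofReal_mul, Complex.ofReal_ofNat, Complex.ofReal_sin]
  rw [hpolar, Complex.log_ofReal_mul hsin (Complex.exp_ne_zero _), Complex.log_exp]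
  · linarith [him, hx.1, pi_pos]
  · linarith [him, hx.2, pi_pos]

lemma re_log_one_sub_circleMap_sq {θ : ℝ} (hθ : θ ∈ Ioo 0 (2 * π)) :
    (Complex.log (1 - circleMap 0 1 θ) ^ 2).re
      = log (2 * sin (θ / 2)) ^ 2 - (θ / 2 - π / 2) ^ 2 := by
  have hhalf : θ / 2 ∈ Ioo 0 π := ⟨by linarith [hθ.1], by linarith [hθ.2]⟩
  have hmap : circleMap 0 1 θ = Complex.exp (2 * (θ / 2 : ℝ) * Complex.I) := by
    rw [circleMap_zero, Complex.ofReal_one, one_mul]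
    push_cast
    ring_nf
  have hlog : Complex.log (1 - circleMap 0 1 θ)
      = (log (2 * sin (θ / 2)) : ℝ) + (θ / 2 - π / 2 : ℝ) * Complex.I := by
    rw [hmap, log_one_sub_exp_two_mul_I hhalf]
    push_cast
    rfl
  rw [hlog, ← Complex.mk_eq_add_mul_I, sq, Complex.mul_re]
  ring

lemma integral_log_two_mul_sin_sq_sub :
    ∫ x in 0..π, (log (2 * sin x) ^ 2 - (x - π / 2) ^ 2) = 0 := by
  have hre : circleAverage (fun z ↦ (Complex.log (1 - z) ^ 2).re) 0 1 = 0 := by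
    have hcomm := Complex.reCLM.circleAverage_comp_comm (circleIntegrable_log_one_sub_pow 2)
    rwa [circleAverage_log_one_sub_pow two_ne_zero, map_zero] at hcomm
  have hcircle : ∫ θ in 0..2 * π, (Complex.log (1 - circleMap 0 1 θ) ^ 2).re = 0 := by
    simpa [circleAverage_def, pi_ne_zero] using hre
  have hhalf := intervalIntegral.integral_comp_div (a := 0) (b := 2 * π)
    (fun x ↦ log (2 * sin x) ^ 2 - (x - π / 2) ^ 2) two_ne_zero
  rw [← intervalIntegral.integral_congr_Ioo_of_le two_pi_pos.le
    fun θ hθ ↦ re_log_one_sub_circleMap_sq hθ, hcircle] at hhalf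
  simpa using hhalf.symm

lemma integral_log_sin_sq_zero_pi :
    ∫ x in 0..π, log (sin x) ^ 2 = π * (log 2 ^ 2 + π ^ 2 / 12) := by
  have hexpand : EqOn (fun x ↦ log (2 * sin x) ^ 2 - (x - π / 2) ^ 2)
      (fun x ↦ log (sin x) ^ 2 + 2 * log 2 * log (sin x) + log 2 ^ 2 - (x - π / 2) ^ 2)
      (Ioo 0 π) := fun x hx ↦ by
    simp only [log_mul two_ne_zero (sin_pos_of_mem_Ioo hx).ne']
    ring
  have hsq := intervalIntegrable_log_sin_pow 2 0 π
  have hlin : IntervalIntegrable (fun x ↦ 2 * log 2 * log (sin x)) volume 0 π :=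
    intervalIntegrable_log_sin.const_mul _
  have hparabola : ∫ x in 0..π, (x - π / 2) ^ 2 = π ^ 3 / 12 := by
    rw [intervalIntegral.integral_comp_sub_right (fun x ↦ x ^ 2), integral_pow]
    ring
  have hzero := integral_log_two_mul_sin_sq_sub
  rw [intervalIntegral.integral_congr_Ioo_of_le pi_pos.le hexpand,
    intervalIntegral.integral_sub ((hsq.add hlin).add intervalIntegrable_const)
      (Continuous.intervalIntegrable (by fun_prop) _ _),
    intervalIntegral.integral_add (hsq.add hlin) intervalIntegrable_const,
    intervalIntegral.integral_add hsq hlin, intervalIntegral.integral_const_mul,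
    integral_log_sin_zero_pi, intervalIntegral.integral_const, hparabola, smul_eq_mul] at hzero
  linear_combination hzero

lemma periodic_log_cos : Function.Periodic (fun x ↦ log (cos x)) π := fun x ↦ by
  simp only [cos_add_pi, log_neg_eq_log]

lemma intervalIntegrable_log_cos_pow (n : ℕ) (a b : ℝ) :
    IntervalIntegrable (fun x ↦ log (cos x) ^ n) volume a b := by
  simpa [sin_add_pi_div_two] using
    (intervalIntegrable_log_sin_pow n (a + π / 2) (b + π / 2)).comp_add_right (π / 2)

lemma integral_log_cos_sq (t : ℝ) :
    ∫ x in t..t + π, log (cos x) ^ 2 = π * (log 2 ^ 2 + π ^ 2 / 12) := by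
  have hperiod : Function.Periodic (fun x ↦ log (cos x) ^ 2) π := periodic_log_cos.comp (· ^ 2)
  calc ∫ x in t..t + π, log (cos x) ^ 2 = ∫ x in -(π / 2)..-(π / 2) + π, log (cos x) ^ 2 :=
        hperiod.intervalIntegral_add_eq t _
    _ = ∫ x in 0..π, log (sin x) ^ 2 := by
        simp only [← sin_add_pi_div_two]
        rw [intervalIntegral.integral_comp_add_right (fun x ↦ log (sin x) ^ 2)]
        congr 1 <;> ring
    _ = π * (log 2 ^ 2 + π ^ 2 / 12) := integral_log_sin_sq_zero_pi

lemma integral_log_cos_sub_sq (φ : ℝ) :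
    ∫ θ in 0..2 * π, log (cos (θ - φ)) ^ 2 = 2 * (π * (log 2 ^ 2 + π ^ 2 / 12)) := by
  have hint := intervalIntegrable_log_cos_pow 2
  rw [intervalIntegral.integral_comp_sub_right (fun x ↦ log (cos x) ^ 2),
    show 0 - φ = -φ by ring, show 2 * π - φ = -φ + π + π by ring,
    ← intervalIntegral.integral_add_adjacent_intervals (hint _ (-φ + π)) (hint _ _),
    integral_log_cos_sq, integral_log_cos_sq, two_mul]

/-- `∫₀^π (log|cos θ|)² dθ = π((log 2)² + π²/12)`; equivalently,
`(1/(2π))·∫₀^{2π} (log cos²(θ-φ))² dθ = 4((log 2)² + π²/12)` for every `φ`. -/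
theorem stmt17 :
    (∫ θ in Set.Ioo (0 : ℝ) π, (Real.log |Real.cos θ|) ^ 2)
      = π * ((Real.log 2) ^ 2 + π ^ 2 / 12) ∧
    ∀ φ : ℝ,
      (1 / (2 * π)) * ∫ θ in Set.Ioo (0 : ℝ) (2 * π), (Real.log ((Real.cos (θ - φ)) ^ 2)) ^ 2
        = 4 * ((Real.log 2) ^ 2 + π ^ 2 / 12) := by
  refine ⟨?_, fun φ ↦ ?_⟩
  · rw [← integral_Ioc_eq_integral_Ioo, ← intervalIntegral.integral_of_le pi_pos.le]
    simpa only [log_abs, zero_add] using integral_log_cos_sq 0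
  · rw [← integral_Ioc_eq_integral_Ioo, ← intervalIntegral.integral_of_le two_pi_pos.le]
    simp only [log_pow, mul_pow, intervalIntegral.integral_const_mul, integral_log_cos_sub_sq φ]
    field_simp
    norm_num
end

section
/- For all φ₁, φ₂ ∈ ℝ, the function θ ↦ log(cos²(θ − φ₁))·log(cos²(θ − φ₂)) is integrable on (0, 2π) and (1/(4π))·∫₀^{2π} log(cos²(θ − φ₁))·log(cos²(θ − φ₂)) dθ = 2·(log 2)² + Σ_{k=1}^∞ cos(2k(φ₂ − φ₁))/k². -/
open MeasureTheory Real

/-!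
On the circle `ℝ / πℤ` the integral is a correlation of two translates of the single function
`log |cos|`, and Parseval's identity expresses such a correlation through the squared moduli of the
Fourier coefficients. These are read off from
`log ‖1 + z‖ = Re (z - z ^ 2 / 2 + z ^ 3 / 3 - ⋯)` at `z = r * exp (2 * I * θ)`: as `r → 1⁻` the
left side tends to `log (2 * |cos θ|)` away from one point, and the right side is the Abel mean of
`∑ (-1) ^ (n + 1) * cos (2 * n * θ) / n`. The coefficients being square summable, the Abel means
converge in `L²` to the Riesz–Fischer sum, and a subsequence converges almost everywhere; the
pointwise limit is therefore square integrable with exactly these Fourier coefficients.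
-/

open AddCircle Filter Topology
open scoped ComplexConjugate ENNReal lp

theorem tendsto_lp_of_dominated {ι α : Type*} {E : α → Type*} [∀ i, NormedAddCommGroup (E i)]
    {p : ℝ≥0∞} [Fact (1 ≤ p)] (hp : p ≠ ∞) {l : Filter ι} {F : ι → lp E p} {f : lp E p}
    {bound : α → ℝ} (hbound : Memℓp bound p) (hF : ∀ᶠ k in l, ∀ i, ‖F k i‖ ≤ bound i)
    (hlim : ∀ i, Tendsto (fun k => F k i) l (𝓝 (f i))) :
    Tendsto F l (𝓝 f) := by
  have hp₀ : 0 < p.toReal := ENNReal.toReal_pos (one_pos.trans_le Fact.out).ne' hp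
  have hsum : Summable fun i => ‖bound i + ‖f i‖‖ ^ p.toReal :=
    (hbound.add (lp.memℓp f).norm).summable hp₀
  have hterm (i : α) : Tendsto (fun k => ‖(F k - f) i‖ ^ p.toReal) l (𝓝 0) := by
    have h := (tendsto_iff_norm_sub_tendsto_zero.1 (hlim i)).rpow_const (.inr hp₀.le)
    rwa [Real.zero_rpow hp₀.ne'] at h
  have hpow : Tendsto (fun k => ‖F k - f‖ ^ p.toReal) l (𝓝 0) := by
    simp_rw [lp.norm_rpow_eq_tsum hp₀]
    rw [← tsum_zero]
    refine tendsto_tsum_of_dominated_convergence hsum hterm (hF.mono fun k hk i => ?_)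
    rw [Real.norm_of_nonneg (by positivity)]
    gcongr
    exact (norm_sub_le _ _).trans ((add_le_add_left (hk i) _).trans (le_abs_self _))
  have h := hpow.rpow_const (p := p.toReal⁻¹) (.inr (by positivity))
  simp_rw [Real.rpow_rpow_inv (norm_nonneg _) hp₀.ne', Real.zero_rpow (inv_pos.2 hp₀).ne'] at h
  exact tendsto_iff_norm_sub_tendsto_zero.2 h

theorem summable_norm_mul_pow_natAbs {𝕜 : Type*} [NormedDivisionRing 𝕜] {c : ℤ → 𝕜} {C : ℝ}
    (hc : ∀ n, ‖c n‖ ≤ C) {z : 𝕜} (hz : ‖z‖ < 1) :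
    Summable fun n => ‖c n * z ^ n.natAbs‖ := by
  have hgeom := summable_geometric_of_lt_one (norm_nonneg z) hz
  have hgeom' : Summable fun n : ℤ => ‖z‖ ^ n.natAbs :=
    .of_nat_of_neg (by simpa using hgeom) (by simpa using hgeom)
  refine (hgeom'.mul_left C).of_nonneg_of_le (fun n => norm_nonneg _) fun n => ?_
  rw [norm_mul, norm_pow]
  gcongr
  exact hc n

theorem hasSum_int_of_neg_eq_conj {f : ℤ → ℂ} (hf : ∀ n, f (-n) = conj (f n)) {s : ℂ}
    (hs : HasSum (fun n : ℕ => f n) s) : HasSum f (2 * s.re - f 0) := by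
  have hneg : HasSum (fun n : ℕ => f (-n)) (conj s) := by
    simpa only [hf] using Complex.hasSum_conj'.2 hs
  have h := hs.of_nat_of_neg hneg
  rwa [Complex.add_conj, Complex.ofReal_mul, Complex.ofReal_ofNat] at h

section AddCircle

variable {T : ℝ}

theorem fourier_apply_add (n : ℤ) (x y : AddCircle T) :
    fourier n (x + y) = fourier n x * fourier n y := by
  rw [fourier_apply, fourier_apply, fourier_apply, smul_add, toCircle_add, Circle.coe_mul]

variable [Fact (0 < T)]

theorem fourierBasis_repr_symm_ae_eq_tsum {c : ℓ²(ℤ, ℂ)} (hc : Summable fun n => ‖c n‖) :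
    (fourierBasis.repr.symm c : Lp ℂ 2 (haarAddCircle (T := T)))
      =ᵐ[haarAddCircle] fun x => ∑' n, c n * fourier n x := by
  have hsum : Summable fun n => c n • (fourier n : C(AddCircle T, ℂ)) :=
    .of_norm (by simpa only [norm_smul, fourier_norm, mul_one] using hc)
  have hLp : ContinuousMap.toLp 2 haarAddCircle ℂ (∑' n, c n • fourier (T := T) n)
      = fourierBasis.repr.symm c := by
    have h := (fourierBasis (T := T)).hasSum_repr_symm c
    rw [coe_fourierBasis] at h
    refine HasSum.unique (f := fun n => c n • fourierLp 2 n) ?_ h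
    simpa only [map_smul] using hsum.hasSum.mapL (ContinuousMap.toLp 2 haarAddCircle ℂ)
  rw [← hLp]
  filter_upwards [ContinuousMap.coeFn_toLp (p := 2) (𝕜 := ℂ) haarAddCircle
    (∑' n, c n • fourier (T := T) n)] with x hx
  exact hx.trans (ContinuousMap.tsum_apply hsum x).symm

theorem ae_eq_fourierBasis_repr_symm_of_tendsto_abel {c : ℓ²(ℤ, ℂ)} {f : AddCircle T → ℂ}
    (hf : ∀ᵐ x ∂haarAddCircle, Tendsto
      (fun r : ℝ => ∑' n : ℤ, c n * r ^ n.natAbs * fourier n x) (𝓝[<] 1) (𝓝 (f x))) :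
    f =ᵐ[haarAddCircle] (fourierBasis.repr.symm c : Lp ℂ 2 haarAddCircle) := by
  obtain ⟨r, -, hr, hr1⟩ := exists_seq_strictMono_tendsto' (zero_lt_one' ℝ)
  have hle (j : ℕ) (n : ℤ) : ‖c n * (r j : ℂ) ^ n.natAbs‖ ≤ ‖c n‖ := by
    rw [norm_mul, norm_pow, Complex.norm_real, Real.norm_of_nonneg (hr j).1.le]
    exact mul_le_of_le_one_right (norm_nonneg _) (pow_le_one₀ (hr j).1.le (hr j).2.le)
  let A (j : ℕ) : ℓ²(ℤ, ℂ) := ⟨_, (lp.memℓp c).mono' (hle j)⟩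
  have hA : Tendsto A atTop (𝓝 c) := by
    refine tendsto_lp_of_dominated ENNReal.ofNat_ne_top (lp.memℓp c).norm
      (.of_forall hle) fun n => ?_
    have h := (((Complex.continuous_ofReal.tendsto 1).comp hr1).pow n.natAbs).const_mul (c n)
    simpa using h
  have hAsum (j : ℕ) : Summable fun n => ‖A j n‖ := by
    refine summable_norm_mul_pow_natAbs (lp.norm_apply_le_norm two_ne_zero c) ?_
    rw [Complex.norm_real, Real.norm_of_nonneg (hr j).1.le]
    exact (hr j).2
  have hLp := ((fourierBasis (T := T)).repr.symm.continuous.tendsto c).comp hA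
  obtain ⟨φ, hφ, hae⟩ := (tendstoInMeasure_of_tendsto_Lp hLp).exists_seq_tendsto_ae
  have hAe : ∀ᵐ x ∂haarAddCircle, ∀ j, (fourierBasis.repr.symm (A j) :
      Lp ℂ 2 (haarAddCircle (T := T))) x = ∑' n, A j n * fourier n x :=
    ae_all_iff.2 fun j => fourierBasis_repr_symm_ae_eq_tsum (hAsum j)
  have hr1' : Tendsto r atTop (𝓝[<] 1) :=
    tendsto_nhdsWithin_iff.2 ⟨hr1, .of_forall fun j => (hr j).2⟩
  filter_upwards [hf, hae, hAe] with x hfx hx hAx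
  refine tendsto_nhds_unique ((hfx.comp hr1').comp hφ.tendsto_atTop) (hx.congr fun j => ?_)
  exact hAx (φ j)

theorem memLp_two_of_tendsto_abel {c : ℓ²(ℤ, ℂ)} {f : AddCircle T → ℂ}
    (hf : ∀ᵐ x ∂haarAddCircle, Tendsto
      (fun r : ℝ => ∑' n : ℤ, c n * r ^ n.natAbs * fourier n x) (𝓝[<] 1) (𝓝 (f x))) :
    MemLp f 2 haarAddCircle :=
  (memLp_congr_ae (ae_eq_fourierBasis_repr_symm_of_tendsto_abel hf)).2 (Lp.memLp _)

theorem fourierCoeff_of_tendsto_abel {c : ℓ²(ℤ, ℂ)} {f : AddCircle T → ℂ}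
    (hf : ∀ᵐ x ∂haarAddCircle, Tendsto
      (fun r : ℝ => ∑' n : ℤ, c n * r ^ n.natAbs * fourier n x) (𝓝[<] 1) (𝓝 (f x))) :
    fourierCoeff f = c := by
  rw [fourierCoeff_congr_ae (ae_eq_fourierBasis_repr_symm_of_tendsto_abel hf)]
  funext n
  rw [← fourierBasis_repr, LinearIsometryEquiv.apply_symm_apply]

theorem hasSum_conj_fourierCoeff_mul {f g : AddCircle T → ℂ} (hf : MemLp f 2 haarAddCircle)
    (hg : MemLp g 2 haarAddCircle) :
    HasSum (fun n => conj (fourierCoeff f n) * fourierCoeff g n)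
      (∫ x, conj (f x) * g x ∂haarAddCircle) := by
  have h := fourierBasis.hasSum_inner_mul_inner (hf.toLp f) (hg.toLp g)
  simp_rw [← inner_conj_symm (hf.toLp f) (fourierBasis _), ← fourierBasis.repr_apply_apply,
    fourierBasis_repr, fourierCoeff_congr_ae hf.coeFn_toLp, fourierCoeff_congr_ae hg.coeFn_toLp]
    at h
  convert! h using 1
  rw [L2.inner_def]
  refine integral_congr_ae ?_
  filter_upwards [hf.coeFn_toLp, hg.coeFn_toLp] with x hfx hgx
  rw [hfx, hgx, RCLike.inner_apply']

theorem fourierCoeff_comp_sub_right {E : Type*} [NormedAddCommGroup E] [NormedSpace ℂ E]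
    (f : AddCircle T → E) (a : AddCircle T) (n : ℤ) :
    fourierCoeff (fun x => f (x - a)) n = fourier (-n) a • fourierCoeff f n := by
  unfold fourierCoeff
  rw [← integral_sub_right_eq_self _ (-a), ← integral_smul]
  congr with x
  simp only [sub_neg_eq_add, add_sub_cancel_right]
  rw [fourier_apply_add, mul_comm, mul_smul]

theorem hasSum_norm_sq_fourierCoeff_mul_fourier {f : AddCircle T → ℂ}
    (hf : MemLp f 2 haarAddCircle) (a b : AddCircle T) :
    HasSum (fun n => (‖fourierCoeff f n‖ : ℂ) ^ 2 * fourier n (a - b))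
      (∫ x, conj (f (x - a)) * f (x - b) ∂haarAddCircle) := by
  have hshift (y : AddCircle T) : MemLp (fun x => f (x - y)) 2 haarAddCircle :=
    hf.comp_measurePreserving (measurePreserving_sub_right _ y)
  convert! hasSum_conj_fourierCoeff_mul (hshift a) (hshift b) using 2 with n
  have hab : fourier n (a - b) = fourier n a * fourier (-n) b := by
    rw [sub_eq_add_neg, fourier_apply_add, fourier_apply (x := -b), smul_neg, ← neg_smul,
      ← fourier_apply]
  rw [fourierCoeff_comp_sub_right, fourierCoeff_comp_sub_right, hab, smul_eq_mul,
    smul_eq_mul, map_mul, ← fourier_neg, neg_neg, ← Complex.conj_mul']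
  ring

instance nullSingletonClass_haarAddCircle : NullSingletonClass (haarAddCircle (T := T)) where
  measure_singleton x := by
    have h := AddCircle.volume_closedBall T (x := x) 0
    rwa [Metric.closedBall_zero, mul_zero, min_eq_right (Fact.out : 0 < T).le, ENNReal.ofReal_zero,
      volume_eq_smul_haarAddCircle, Measure.smul_apply, smul_eq_mul,
      mul_eq_zero_iff_left (ENNReal.ofReal_pos.2 Fact.out).ne'] at h

theorem ae_toCircle_ne (z : Circle) :
    ∀ᵐ x : AddCircle T ∂haarAddCircle, x.toCircle ≠ z := by
  have hsub : {x : AddCircle T | x.toCircle = z}.Subsingleton := fun x hx y hy =>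
    injective_toCircle (Fact.out : 0 < T).ne' (hx.trans hy.symm)
  simpa [ae_iff] using hsub.measure_zero haarAddCircle

theorem intervalIntegrable_comp_coe {E : Type*} [NormedAddCommGroup E] {f : AddCircle T → E}
    (hf : Integrable f haarAddCircle) (s t : ℝ) :
    IntervalIntegrable (fun θ : ℝ => f θ) volume s t := by
  have hT : 0 < T := Fact.out
  have hvol : Integrable f := hf.smul_measure ENNReal.ofReal_ne_top
  have hper : Function.Periodic (fun θ : ℝ => f θ) T := fun θ => by simp only [coe_add_period]
  refine hper.intervalIntegrable hT.ne' (t := 0) ?_ s t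
  rw [intervalIntegrable_iff_integrableOn_Ioc_of_le (by linarith)]
  exact (AddCircle.measurePreserving_mk T 0).integrable_comp_of_integrable hvol

theorem intervalIntegral_comp_coe_add_zsmul {E : Type*} [NormedAddCommGroup E] [NormedSpace ℝ E]
    {f : AddCircle T → E} (hf : Integrable f haarAddCircle) (n : ℤ) (t : ℝ) :
    ∫ θ in t..t + n • T, f θ = (n * T) • ∫ x, f x ∂haarAddCircle := by
  have hper : Function.Periodic (fun θ : ℝ => f θ) T := fun θ => by simp only [coe_add_period]
  rw [hper.intervalIntegral_add_zsmul_eq n t (intervalIntegrable_comp_coe hf),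
    AddCircle.intervalIntegral_preimage, integral_haarAddCircle, smul_smul,
    mul_inv_cancel_right₀ (Fact.out : 0 < T).ne', Int.cast_smul_eq_zsmul]

end AddCircle

section logAbsCos

variable {T : ℝ}

/-- The function `log |cos|`, rescaled to period `T`: the identity
`‖1 + exp (2 * π * I * θ / T)‖ = 2 * |cos (π * θ / T)|` lets it be written on `AddCircle T`. At the
zero of the cosine its value is `log 0 = 0`. -/
noncomputable def logAbsCos (x : AddCircle T) : ℝ :=
  log (‖1 + (x.toCircle : ℂ)‖ / 2)

/-- The `n`-th Fourier coefficient of `logAbsCos`: a real number, complex-valued here to match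
`fourierCoeff`. -/
noncomputable def logAbsCosCoeff (n : ℤ) : ℂ :=
  if n = 0 then -log 2 else (-1) ^ (n.natAbs + 1) / (2 * n.natAbs)

theorem norm_one_add_exp_two_mul_I (y : ℝ) :
    ‖1 + Complex.exp (2 * y * Complex.I)‖ = 2 * |cos y| := by
  have hfactor : 1 + Complex.exp (2 * y * Complex.I)
      = (2 * cos y : ℝ) * Complex.exp (y * Complex.I) := by
    rw [Complex.ofReal_mul, Complex.ofReal_cos, Complex.ofReal_ofNat, Complex.two_cos, add_mul,
      ← Complex.exp_add, ← Complex.exp_add, neg_mul, neg_add_cancel, Complex.exp_zero, add_comm]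
    ring_nf
  rw [hfactor, norm_mul, Complex.norm_exp_ofReal_mul_I, mul_one, Complex.norm_real, norm_mul,
    Real.norm_two, Real.norm_eq_abs]

theorem logAbsCos_coe (θ : ℝ) : logAbsCos (θ : AddCircle T) = log |cos (π * θ / T)| := by
  have hexp : (toCircle (θ : AddCircle T) : ℂ)
      = Complex.exp (2 * (π * θ / T : ℝ) * Complex.I) := by
    rw [toCircle_apply_mk, Circle.coe_exp]
    push_cast
    ring_nf
  rw [logAbsCos, hexp, norm_one_add_exp_two_mul_I, mul_div_cancel_left₀ _ two_ne_zero]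

theorem norm_logAbsCosCoeff_zero : ‖logAbsCosCoeff 0‖ = log 2 := by
  rw [logAbsCosCoeff, if_pos rfl, norm_neg, Complex.norm_real,
    Real.norm_of_nonneg (log_nonneg one_le_two)]

theorem norm_logAbsCosCoeff_sq_of_ne_zero {n : ℤ} (hn : n ≠ 0) :
    ‖logAbsCosCoeff n‖ ^ 2 = 1 / (4 * (n : ℝ) ^ 2) := by
  rw [logAbsCosCoeff, if_neg hn, norm_div, norm_pow, norm_neg, norm_one, one_pow, norm_mul,
    Complex.norm_two, Complex.norm_natCast, Nat.cast_natAbs, div_pow, mul_pow, Int.cast_abs, sq_abs]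
  norm_num

theorem memℓp_logAbsCosCoeff : Memℓp logAbsCosCoeff 2 := by
  refine memℓp_gen ?_
  simp only [ENNReal.toReal_ofNat, Real.rpow_ofNat]
  refine ((Real.summable_one_div_int_pow.2 one_lt_two).mul_left (1 / 4)).congr_cofinite ?_
  filter_upwards [(Set.finite_singleton (0 : ℤ)).compl_mem_cofinite] with n hn
  rw [norm_logAbsCosCoeff_sq_of_ne_zero hn, one_div_mul_one_div]

theorem logAbsCosCoeff_neg (n : ℤ) : logAbsCosCoeff (-n) = logAbsCosCoeff n := by
  simp only [logAbsCosCoeff, neg_eq_zero, Int.natAbs_neg]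

theorem conj_logAbsCosCoeff (n : ℤ) : conj (logAbsCosCoeff n) = logAbsCosCoeff n := by
  unfold logAbsCosCoeff
  split_ifs
  · rw [map_neg, Complex.conj_ofReal]
  · simp_rw [map_div₀, map_mul, map_pow, map_neg, map_one, map_ofNat, map_natCast]

theorem hasSum_nat_logAbsCosCoeff_mul_pow {z : ℂ} (hz : ‖z‖ < 1) :
    HasSum (fun n : ℕ => logAbsCosCoeff n * z ^ n) (Complex.log (1 + z) / 2 - log 2) := by
  have h := ((Complex.hasSum_taylorSeries_log hz).div_const 2).add
    (hasSum_ite_eq 0 (-log 2 : ℂ))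
  rw [← sub_eq_add_neg] at h
  refine h.congr_fun fun n => ?_
  rcases eq_or_ne n 0 with rfl | hn
  · simp [logAbsCosCoeff]
  · rw [logAbsCosCoeff, if_neg (Int.natCast_ne_zero.2 hn), if_neg hn, Int.natAbs_natCast]
    ring

theorem hasSum_logAbsCosCoeff_mul_pow {r : ℝ} (hr : |r| < 1) (x : AddCircle T) :
    HasSum (fun n => logAbsCosCoeff n * r ^ n.natAbs * fourier n x)
      (log (‖1 + r * (x.toCircle : ℂ)‖ / 2) : ℂ) := by
  set z : ℂ := r * x.toCircle with hz
  have hz1 : ‖z‖ < 1 := by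
    rwa [hz, norm_mul, Circle.norm_coe, mul_one, Complex.norm_real]
  have hne : 1 + z ≠ 0 := Complex.slitPlane_ne_zero (Complex.mem_slitPlane_of_norm_lt_one hz1)
  have hnat : HasSum (fun n : ℕ => logAbsCosCoeff n * r ^ (n : ℤ).natAbs * fourier n x)
      (Complex.log (1 + z) / 2 - log 2) := by
    refine (hasSum_nat_logAbsCosCoeff_mul_pow hz1).congr_fun fun n => ?_
    rw [hz, mul_pow, fourier_apply, toCircle_zsmul, Circle.coe_zpow, zpow_natCast,
      Int.natAbs_natCast, mul_assoc]
  have hre : (log (‖1 + z‖ / 2) : ℂ)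
      = 2 * (Complex.log (1 + z) / 2 - log 2).re - logAbsCosCoeff 0 := by
    rw [Real.log_div (norm_ne_zero_iff.2 hne) two_ne_zero, Complex.sub_re, Complex.div_ofNat_re,
      Complex.log_re, Complex.ofReal_re, logAbsCosCoeff, if_pos rfl]
    push_cast
    ring
  have hneg (n : ℤ) : logAbsCosCoeff (-n) * r ^ (-n).natAbs * fourier (-n) x
      = conj (logAbsCosCoeff n * r ^ n.natAbs * fourier n x) := by
    rw [logAbsCosCoeff_neg, Int.natAbs_neg, fourier_neg, map_mul, map_mul, map_pow,
      conj_logAbsCosCoeff, Complex.conj_ofReal]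
  rw [hre]
  have h := hasSum_int_of_neg_eq_conj
    (f := fun n => logAbsCosCoeff n * r ^ n.natAbs * fourier n x) hneg hnat
  simpa only [Int.natAbs_zero, pow_zero, mul_one, fourier_zero] using h

variable [Fact (0 < T)]

theorem tendsto_abel_logAbsCos : ∀ᵐ x : AddCircle T ∂haarAddCircle, Tendsto
    (fun r : ℝ => ∑' n : ℤ, logAbsCosCoeff n * r ^ n.natAbs * fourier n x)
    (𝓝[<] 1) (𝓝 (logAbsCos x : ℂ)) := by
  filter_upwards [ae_toCircle_ne (-1)] with x hx
  have hne : 1 + (x.toCircle : ℂ) ≠ 0 := fun h =>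
    hx (Circle.ext (by simpa using eq_neg_of_add_eq_zero_right h))
  have hcont : ContinuousAt (fun r : ℝ => (log (‖1 + r * (x.toCircle : ℂ)‖ / 2) : ℂ)) 1 := by
    refine Complex.continuous_ofReal.continuousAt.comp (ContinuousAt.log (by fun_prop) ?_)
    simpa using hne
  have hlim := hcont.tendsto.mono_left (nhdsWithin_le_nhds (s := Set.Iio 1))
  simp only [Complex.ofReal_one, one_mul] at hlim
  refine hlim.congr' ?_
  filter_upwards [Ioo_mem_nhdsLT (show (-1 : ℝ) < 1 by norm_num)] with r hr
  exact (hasSum_logAbsCosCoeff_mul_pow (abs_lt.2 hr) x).tsum_eq.symm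

theorem memLp_ofReal_logAbsCos :
    MemLp (fun x : AddCircle T => (logAbsCos x : ℂ)) 2 haarAddCircle :=
  memLp_two_of_tendsto_abel (c := ⟨logAbsCosCoeff, memℓp_logAbsCosCoeff⟩) tendsto_abel_logAbsCos

theorem memLp_logAbsCos : MemLp (logAbsCos (T := T)) 2 haarAddCircle :=
  memLp_ofReal_logAbsCos.re

theorem fourierCoeff_logAbsCos :
    fourierCoeff (fun x : AddCircle T => (logAbsCos x : ℂ)) = logAbsCosCoeff :=
  fourierCoeff_of_tendsto_abel (c := ⟨logAbsCosCoeff, memℓp_logAbsCosCoeff⟩) tendsto_abel_logAbsCos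

theorem hasSum_norm_sq_logAbsCosCoeff_mul_cos (a b : ℝ) :
    HasSum (fun n : ℤ => ‖logAbsCosCoeff n‖ ^ 2 * cos (2 * n * (π * (b - a) / T)))
      (∫ x : AddCircle T, logAbsCos (x - (a : AddCircle T)) * logAbsCos (x - (b : AddCircle T))
        ∂haarAddCircle) := by
  have h := Complex.hasSum_re
    (hasSum_norm_sq_fourierCoeff_mul_fourier (T := T) memLp_ofReal_logAbsCos b a)
  simp_rw [Complex.conj_ofReal, ← Complex.ofReal_mul, integral_complex_ofReal, Complex.ofReal_re,
    fourierCoeff_logAbsCos, mul_comm (logAbsCos (_ - (b : AddCircle T)))] at h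
  refine h.congr_fun fun n => ?_
  have harg : 2 * π * Complex.I * n * (b - a : ℝ) / T
      = (2 * n * (π * (b - a) / T) : ℝ) * Complex.I := by
    push_cast
    ring
  rw [← coe_sub, fourier_coe_apply, harg, ← Complex.ofReal_pow, Complex.re_ofReal_mul,
    Complex.exp_ofReal_mul_I_re]

theorem integral_logAbsCos_sub_mul_logAbsCos_sub (a b : ℝ) :
    ∫ x : AddCircle T, logAbsCos (x - (a : AddCircle T)) * logAbsCos (x - (b : AddCircle T))
        ∂haarAddCircle
      = log 2 ^ 2 + (∑' k : ℕ, cos (2 * (k + 1) * (π * (b - a) / T)) / (k + 1) ^ 2) / 2 := by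
  have hpair (k : ℕ) :
      ‖logAbsCosCoeff (k + 1 : ℕ)‖ ^ 2 * cos (2 * (k + 1 : ℕ) * (π * (b - a) / T))
        + ‖logAbsCosCoeff (-(k + 1 : ℕ))‖ ^ 2 * cos (2 * -(k + 1 : ℕ) * (π * (b - a) / T))
      = cos (2 * (k + 1) * (π * (b - a) / T)) / (k + 1) ^ 2 / 2 := by
    rw [logAbsCosCoeff_neg, norm_logAbsCosCoeff_sq_of_ne_zero (by positivity), mul_neg, neg_mul,
      cos_neg]
    push_cast
    field_simp
    ring
  have h := ((hasSum_nat_add_iff' 1).2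
    (hasSum_norm_sq_logAbsCosCoeff_mul_cos (T := T) a b).nat_add_neg).tsum_eq
  simp only [Int.cast_neg, Int.cast_natCast] at h
  simp_rw [hpair] at h
  simp only [tsum_div_const, Finset.sum_range_one, Nat.cast_zero, neg_zero, Int.cast_zero,
    mul_zero, zero_mul, cos_zero, mul_one, norm_logAbsCosCoeff_zero] at h
  linarith

theorem integrable_logAbsCos_sub_mul_logAbsCos_sub (a b : AddCircle T) :
    Integrable (fun x => logAbsCos (x - a) * logAbsCos (x - b)) haarAddCircle :=
  (memLp_logAbsCos.comp_measurePreserving (measurePreserving_sub_right _ a)).integrable_mul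
    (memLp_logAbsCos.comp_measurePreserving (measurePreserving_sub_right _ b))

end logAbsCos

theorem log_cos_sub_sq_eq_logAbsCos (θ φ : ℝ) :
    log (cos (θ - φ) ^ 2) = 2 * logAbsCos ((θ : AddCircle π) - (φ : AddCircle π)) := by
  rw [← coe_sub, logAbsCos_coe, mul_div_cancel_left₀ _ pi_ne_zero, log_abs, log_pow, Nat.cast_ofNat]

/-- For all `φ₁, φ₂ ∈ ℝ`, `θ ↦ log cos²(θ-φ₁) · log cos²(θ-φ₂)` is
integrable on `(0, 2π)` and
`(1/(4π))·∫₀^{2π} log cos²(θ-φ₁) log cos²(θ-φ₂) dθ = 2(log 2)² + Σ_{k≥1} cos(2k(φ₂-φ₁))/k²`. -/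
theorem stmt18 (φ₁ φ₂ : ℝ) :
    IntegrableOn (fun θ : ℝ =>
        Real.log ((Real.cos (θ - φ₁)) ^ 2) * Real.log ((Real.cos (θ - φ₂)) ^ 2))
      (Set.Ioo 0 (2 * π)) ∧
    (1 / (4 * π)) * ∫ θ in Set.Ioo (0 : ℝ) (2 * π),
        Real.log ((Real.cos (θ - φ₁)) ^ 2) * Real.log ((Real.cos (θ - φ₂)) ^ 2)
      = 2 * (Real.log 2) ^ 2
        + ∑' k : ℕ, Real.cos (2 * ((k : ℝ) + 1) * (φ₂ - φ₁)) / ((k : ℝ) + 1) ^ 2 := by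
  have : Fact (0 < π) := ⟨pi_pos⟩
  have hint := (integrable_logAbsCos_sub_mul_logAbsCos_sub (T := π) φ₁ φ₂).const_mul 4
  have hprod (θ : ℝ) : log (cos (θ - φ₁) ^ 2) * log (cos (θ - φ₂) ^ 2)
      = 4 * (logAbsCos ((θ : AddCircle π) - (φ₁ : AddCircle π))
        * logAbsCos ((θ : AddCircle π) - (φ₂ : AddCircle π))) := by
    rw [log_cos_sub_sq_eq_logAbsCos, log_cos_sub_sq_eq_logAbsCos]
    ring
  simp_rw [hprod]
  refine ⟨(intervalIntegrable_iff_integrableOn_Ioo_of_le (by positivity)).1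
    (intervalIntegrable_comp_coe hint 0 (2 * π)), ?_⟩
  have hcircle := intervalIntegral_comp_coe_add_zsmul hint 2 0
  rw [integral_const_mul, integral_logAbsCos_sub_mul_logAbsCos_sub, zero_add, zsmul_eq_mul,
    Int.cast_ofNat, smul_eq_mul] at hcircle
  have hscale (x : ℝ) : 1 / (4 * π) * (2 * π * (4 * x)) = 2 * x := by field_simp
  simp_rw [mul_div_cancel_left₀ _ pi_ne_zero] at hcircle
  rw [← integral_Ioc_eq_integral_Ioo, ← intervalIntegral.integral_of_le (by positivity), hcircle,
    hscale]
  ring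
end
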